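/- arXiv:2203.12492 — 3 statements merged into one kernel-verified Lean document; each statement's English description precedes it below -/
import Mathlib

section
/- For all integers d ≥ 1 and r ≥ 0, the labeling f : D(Z(d,r)) → Φ⁺ is injective and its image is exactly the inversion set Inv(w^{(d,r)}) of the signed permutation w^{(d,r)} ∈ W(B_{d+r}). -/
open scoped BigOperators

namespace BST

/-- `lam` (1-indexed, with `d` parts) is a strict partition: strictly decreasing
positive parts `lam 1 > lam 2 > ⋯ > lam d > 0`. -/
def IsStrictPartition (d : ℕ) (lam : ℕ → ℕ) : Prop :=
  (∀ i : ℕ, 1 ≤ i → i < d → lam (i + 1) < lam i) ∧ 1 ≤ lam d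

/-- The size `|λ| = λ_1 + ⋯ + λ_d`. -/
def sizeP (d : ℕ) (lam : ℕ → ℕ) : ℕ := ∑ i ∈ Finset.Icc 1 d, lam i

/-- The shifted diagram `D(λ) ⊆ ℤ × ℤ`: row `i` (1 ≤ i ≤ d) occupies columns
`i - d, …, λ_i + i - d - 1`. -/
def Diagram (d : ℕ) (lam : ℕ → ℕ) : Set (ℤ × ℤ) :=
  {p : ℤ × ℤ | 1 ≤ p.1 ∧ p.1 ≤ (d : ℤ) ∧ p.1 - (d : ℤ) ≤ p.2 ∧
    p.2 + (d : ℤ) + 1 ≤ (lam p.1.toNat : ℤ) + p.1}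

/-- The hook `H(i,c)`. -/
def Hook (d : ℕ) (lam : ℕ → ℕ) (i c : ℤ) : Set (ℤ × ℤ) :=
  {(i, c)} ∪ {p ∈ Diagram d lam | (p.1 = i ∧ c < p.2) ∨ (p.2 = c ∧ i < p.1)} ∪
    {p ∈ Diagram d lam | c < 0 ∧ p.1 = (d : ℤ) + 1 + c}

/-- The extended hook `H̃(i,c)`. -/
def ExtHook (d : ℕ) (lam : ℕ → ℕ) (i c : ℤ) : Set (ℤ × ℤ) :=
  Hook d lam i c ∪ {p : ℤ × ℤ | c < 0 ∧ p = ((d : ℤ) + 1 + c, c)}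

/-- The extended diagram `D(λ) ∪ {(i, i - d - 1) : 1 ≤ i ≤ d}`. -/
def ExtDiagram (d : ℕ) (lam : ℕ → ℕ) : Set (ℤ × ℤ) :=
  Diagram d lam ∪ {p : ℤ × ℤ | 1 ≤ p.1 ∧ p.1 ≤ (d : ℤ) ∧ p.2 = p.1 - ((d : ℤ) + 1)}

/-- The extended filling `B̃`, with `B̃(i, i - d - 1) = B(i, 0)`. -/
def ExtFilling (d : ℕ) (B : ℤ × ℤ → ℕ) : ℤ × ℤ → ℕ :=
  fun p => if p.2 = p.1 - ((d : ℤ) + 1) then B (p.1, 0) else B p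

/-- The rank function `rk(i,c)`. -/
def rk (d : ℕ) (lam : ℕ → ℕ) (i c : ℤ) : ℤ :=
  if 0 ≤ c then (lam i.toNat : ℤ) - d + i - c
  else (lam i.toNat : ℤ) - d + i + (lam ((d : ℤ) + 1 + c).toNat : ℤ) + c + 1

/-- A bijective filling of `D(λ)` with `1, …, |λ|` (normalized to be `0` off the diagram). -/
def IsFilling (d : ℕ) (lam : ℕ → ℕ) (B : ℤ × ℤ → ℕ) : Prop :=
  Set.BijOn B (Diagram d lam) (Set.Icc 1 (sizeP d lam)) ∧
    ∀ p : ℤ × ℤ, p ∉ Diagram d lam → B p = 0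

/-- A balanced shifted tableau: a bijective filling such that at each box `(i,c)`,
`B(i,c)` is the `rk(i,c)`-th largest entry of the multiset of values of `B̃` on the
extended hook, i.e. exactly `rk(i,c) - 1` boxes of the extended hook carry a value
strictly larger than `B(i,c)`. -/
def IsBalanced (d : ℕ) (lam : ℕ → ℕ) (B : ℤ × ℤ → ℕ) : Prop :=
  IsFilling d lam B ∧ ∀ p ∈ Diagram d lam,
    ({q ∈ ExtHook d lam p.1 p.2 | B p < ExtFilling d B q}.ncard : ℤ) =
      rk d lam p.1 p.2 - 1

/-- A standard Young tableau of shifted shape `λ`. -/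
def IsSYT (d : ℕ) (lam : ℕ → ℕ) (B : ℤ × ℤ → ℕ) : Prop :=
  IsFilling d lam B ∧ ∀ p ∈ Diagram d lam, ∀ q ∈ Diagram d lam,
    ((p.1 = q.1 ∧ p.2 < q.2) → B p < B q) ∧ ((p.2 = q.2 ∧ p.1 < q.1) → B p < B q)

/-- The simple reflections of `W(B_n)`, acting on `ℤ`: `s 0` swaps `1 ↔ -1`,
and `s a` (for `a ≥ 1`) swaps `a ↔ a+1` and `-a ↔ -(a+1)`. -/
def sB (a : ℕ) : Equiv.Perm ℤ :=
  if a = 0 then Equiv.swap 1 (-1)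
  else Equiv.swap (a : ℤ) ((a : ℤ) + 1) * Equiv.swap (-(a : ℤ)) (-(a : ℤ) - 1)

/-- The product `s_{a_1} s_{a_2} ⋯ s_{a_m}` of a word. -/
def wordProd (L : List ℕ) : Equiv.Perm ℤ := (L.map sB).prod

/-- A signed permutation in `W(B_n)`: odd, and the identity beyond `n`. -/
def IsSignedPerm (n : ℕ) (w : Equiv.Perm ℤ) : Prop :=
  (∀ i : ℤ, w (-i) = -(w i)) ∧ ∀ i : ℤ, (n : ℤ) < |i| → w i = i

/-- The Coxeter length of `w` in `W(B_n)`. -/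
noncomputable def lengthB (n : ℕ) (w : Equiv.Perm ℤ) : ℕ :=
  sInf {m : ℕ | ∃ L : List ℕ, (∀ a ∈ L, a < n) ∧ wordProd L = w ∧ L.length = m}

/-- `L` is a reduced word of `w` in `W(B_n)`. -/
def IsReducedWord (n : ℕ) (w : Equiv.Perm ℤ) (L : List ℕ) : Prop :=
  (∀ a ∈ L, a < n) ∧ wordProd L = w ∧ L.length = lengthB n w

/-- The vector `e_k` (for `k ≥ 1` the `k`-th standard basis vector, with the
conventions `e 0 = 0` and `e (-k) = - e k`), represented as an odd function `ℤ → ℤ`. -/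
def eVec (k : ℤ) : ℤ → ℤ :=
  fun t => if t = 0 then 0 else if t = k then 1 else if t = -k then -1 else 0

/-- The positive roots of type `B_n`. -/
def PosRoots (n : ℕ) : Set (ℤ → ℤ) :=
  {v | (∃ i j : ℤ, 1 ≤ i ∧ i < j ∧ j ≤ (n : ℤ) ∧
        (v = eVec j - eVec i ∨ v = eVec j + eVec i)) ∨
       (∃ i : ℤ, 1 ≤ i ∧ i ≤ (n : ℤ) ∧ v = eVec i)}

/-- The action of a signed permutation on vectors: `w · e_i = e_{w(i)}`. -/
def actB (w : Equiv.Perm ℤ) (v : ℤ → ℤ) : ℤ → ℤ := fun t => v (w⁻¹ t)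

/-- The inversion set `Inv(w) = {α ∈ Φ⁺ : w⁻¹ · α ∈ -Φ⁺}`. -/
def InvSet (n : ℕ) (w : Equiv.Perm ℤ) : Set (ℤ → ℤ) :=
  {α | α ∈ PosRoots n ∧ -(actB w⁻¹ α) ∈ PosRoots n}

/-- The simple roots: `α_0 = e_1` and `α_a = e_{a+1} - e_a` for `a ≥ 1`. -/
def alphaRoot (a : ℕ) : ℤ → ℤ :=
  if a = 0 then eVec 1 else eVec ((a : ℤ) + 1) - eVec (a : ℤ)

/-- The reflection order of a word: `reflOrder L t = γ_{t+1} = s_{a_1} ⋯ s_{a_t} · α_{a_{t+1}}`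
(0-indexed). -/
def reflOrder (L : List ℕ) (t : ℕ) : ℤ → ℤ :=
  actB (wordProd (L.take t)) (alphaRoot (L.getD t 0))

/-- The trapezoid `Z(d,r) = (r+2d-1, r+2d-3, …, r+1)`. -/
def Zlam (d r : ℕ) : ℕ → ℕ := fun i => r + 2 * d + 1 - 2 * i

/-- The labeling `f : D(Z(d,r)) → Φ⁺`. -/
def fLabel (d r : ℕ) (p : ℤ × ℤ) : ℤ → ℤ :=
  if p.2 ≤ 0 then eVec ((d : ℤ) + 1 - p.1) - eVec p.2
  else if p.2 ≤ (r : ℤ) then eVec ((d : ℤ) + 1 - p.1) + eVec (p.2 + (d : ℤ))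
  else eVec ((d : ℤ) + 1 - p.1) - eVec (p.2 - (r : ℤ))

/-- The extended labeling `f̃`, with `f̃(i, i - d - 1) = 2 e_{d+1-i}`. -/
def fExtLabel (d r : ℕ) (p : ℤ × ℤ) : ℤ → ℤ :=
  if p.2 = p.1 - ((d : ℤ) + 1) then (2 : ℤ) • eVec ((d : ℤ) + 1 - p.1)
  else fLabel d r p

/-- `w` is the signed permutation `w^{(d,r)} ∈ W(B_{d+r})`, i.e.
`w(i) = d + i` for `1 ≤ i ≤ r` and `w(i) = -(i - r)` for `r < i ≤ d + r`. -/
def IsWdr (d r : ℕ) (w : Equiv.Perm ℤ) : Prop :=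
  IsSignedPerm (d + r) w ∧
    (∀ i : ℤ, 1 ≤ i → i ≤ (r : ℤ) → w i = (d : ℤ) + i) ∧
    (∀ i : ℤ, (r : ℤ) < i → i ≤ (d : ℤ) + (r : ℤ) → w i = -(i - r))


/-- `x` lies strictly between `y` and `z` (i.e. `min(y,z) < x < max(y,z)`). -/
def Between (x y z : ℕ) : Prop := (y < x ∧ x < z) ∨ (z < x ∧ x < y)

/-- A nonempty list is unimodal: strictly decreasing down to its minimum
(at 0-indexed position `k`), then strictly increasing. -/
def Unimodal (L : List ℕ) : Prop :=
  ∃ k : ℕ, k < L.length ∧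
    (∀ a b : ℕ, a < b → b ≤ k → L.getD b 0 < L.getD a 0) ∧
    (∀ a b : ℕ, k ≤ a → a < b → b < L.length → L.getD a 0 < L.getD b 0)

/-- Row `i` of the distinguished tableau of shape `Z(d,r)`:
`(r+d-i, …, r+1, 0, 1, …, r+d-i)`. -/
def rowWord (d r i : ℕ) : List ℕ :=
  (List.range (r + 2 * (d - i) + 1)).map fun t =>
    if t < d - i then r + (d - i) - t else t - (d - i)

/-- The reading word `π(T) = T_d T_{d-1} ⋯ T_1` of the distinguished tableau of
shape `Z(d,r)`. -/
def piWord (d r : ℕ) : List ℕ :=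
  (List.range d).flatMap fun k => rowWord d r (d - k)

/-- `μ_i = Z(d,r)_i - λ_i`. -/
def muF (d r : ℕ) (lam : ℕ → ℕ) (i : ℕ) : ℕ := r + 2 * d + 1 - 2 * i - lam i

/-- `σ_i = μ_1 + ⋯ + μ_i`. -/
def sigmaF (d r : ℕ) (lam : ℕ → ℕ) (i : ℕ) : ℕ := ∑ t ∈ Finset.Icc 1 i, muF d r lam t

/-- `ν_i = min{μ_i, …, μ_d}`. -/
noncomputable def nuF (d r : ℕ) (lam : ℕ → ℕ) (i : ℕ) : ℕ :=
  sInf {m : ℕ | ∃ j : ℕ, i ≤ j ∧ j ≤ d ∧ m = muF d r lam j}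

/-- The word `a^λ`: the concatenation over `i = 1, …, d` of the increasing runs
`(d+r-i-μ_i+1, …, d+r-i)`. -/
def aLamWord (d r : ℕ) (lam : ℕ → ℕ) : List ℕ :=
  (List.range d).flatMap fun k =>
    (List.range (muF d r lam (k + 1))).map fun t =>
      d + r - (k + 1) - muF d r lam (k + 1) + 1 + t

/-- Row `i` of the tableau `P(w^λ)`: entries `P(i,c) = c` for `c ≥ 0` and
`P(i,c) = r - c - ν_{d+1+c}` for `c < 0`. -/
noncomputable def rowWordP (d r : ℕ) (lam : ℕ → ℕ) (i : ℕ) : List ℕ :=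
  (List.range (lam i)).map fun t =>
    if t < d - i then r + (d - i) - t - nuF d r lam (i + 1 + t) else t - (d - i)

/-- The reading word `π(P(w^λ))`. -/
noncomputable def piWordP (d r : ℕ) (lam : ℕ → ℕ) : List ℕ :=
  (List.range d).flatMap fun k => rowWordP d r lam (d - k)

/-- The shape obtained from `λ` by adding one box at the end of row `i`. -/
def stepShape (lam : ℕ → ℕ) (i : ℕ) : ℕ → ℕ :=
  fun t => if t = i then lam i + 1 else lam t

/-- The box-adding map `f_i` on fillings: swap columns `j = λ_i + i - d` and `j + 1`
(in rows `1, …, i-1`), and put the value `N + 1` in the new box `(i, j)`. -/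
def addBox (d : ℕ) (lam : ℕ → ℕ) (i : ℕ) (N : ℕ) (B : ℤ × ℤ → ℕ) : ℤ × ℤ → ℕ :=
  fun p =>
    if p = ((i : ℤ), (lam i : ℤ) + (i : ℤ) - (d : ℤ)) then N + 1
    else if 1 ≤ p.1 ∧ p.1 < (i : ℤ) ∧ p.2 = (lam i : ℤ) + (i : ℤ) - (d : ℤ) then
      B (p.1, p.2 + 1)
    else if 1 ≤ p.1 ∧ p.1 < (i : ℤ) ∧ p.2 = (lam i : ℤ) + (i : ℤ) - (d : ℤ) + 1 then
      B (p.1, p.2 - 1)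
    else B p

/-- Successively apply the box-adding maps along a list of row indices,
tracking the current shape. -/
def FmapAux (d : ℕ) : List ℕ → (ℕ → ℕ) → (ℤ × ℤ → ℕ) → (ℤ × ℤ → ℕ)
  | [], _, B => B
  | i :: rest, lam, B => FmapAux d rest (stepShape lam i) (addBox d lam i (sizeP d lam) B)

/-- The shape after successively adding boxes along a list of row indices. -/
def shapeAux : List ℕ → (ℕ → ℕ) → (ℕ → ℕ)
  | [], lam => lam
  | i :: rest, lam => shapeAux rest (stepShape lam i)

/-- The list of row indices `1^{μ_1} 2^{μ_2} ⋯ d^{μ_d}` used to pad `λ` to `Z(d,r)`. -/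
def rowsList (d r : ℕ) (lam : ℕ → ℕ) : List ℕ :=
  (List.range d).flatMap fun k => List.replicate (muF d r lam (k + 1)) (k + 1)

/-- `BS(Z(d,r))|_λ`: balanced tableaux of shape `Z(d,r)` such that for each
`i ∈ {1,…,d}` the entries `N + σ_{i-1} + 1, …, N + σ_i` all occur in row `i`. -/
def BSRestricted (d r : ℕ) (lam : ℕ → ℕ) : Set (ℤ × ℤ → ℕ) :=
  {T | IsBalanced d (Zlam d r) T ∧ ∀ i : ℕ, 1 ≤ i → i ≤ d →
    ∀ k : ℕ, sizeP d lam + sigmaF d r lam (i - 1) + 1 ≤ k →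
      k ≤ sizeP d lam + sigmaF d r lam i →
      ∃ c : ℤ, ((i : ℤ), c) ∈ Diagram d (Zlam d r) ∧ T ((i : ℤ), c) = k}

/-- `w ∈ W(B_n)` pattern embeds the signed pattern `v` (given as its one-line
notation, a list of nonzero integers). -/
def PatternEmbeds (n : ℕ) (w : Equiv.Perm ℤ) (v : List ℤ) : Prop :=
  ∃ idx : Fin v.length → ℤ, StrictMono idx ∧
    (∀ j, 1 ≤ idx j ∧ idx j ≤ (n : ℤ)) ∧
    (∀ j, 0 < w (idx j) ↔ 0 < v.get j) ∧
    (∀ j k, |w (idx j)| < |w (idx k)| ↔ |v.get j| < |v.get k|)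


theorem eVec_neg' (k : ℤ) : eVec (-k) = -eVec k := by
  funext t
  simp only [eVec, Pi.neg_apply]
  split_ifs <;> omega

theorem eVec_zero' : eVec 0 = 0 := by
  funext t
  simp only [eVec, Pi.zero_apply]
  split_ifs <;> omega

theorem eVec_inj_aux (d a b a' b' : ℤ) (ha : 1 ≤ a) (had : a ≤ d) (ha' : 1 ≤ a') (had' : a' ≤ d)
    (hb : (-a < b ∧ b < a) ∨ d < b) (hb' : (-a' < b' ∧ b' < a') ∨ d < b')
    (h : eVec a + eVec b = eVec a' + eVec b') : a = a' ∧ b = b' := by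
  have h1 := congrFun h a
  have h2 := congrFun h a'
  have h3 := congrFun h b
  have h4 := congrFun h b'
  simp only [eVec, Pi.add_apply] at h1 h2 h3 h4
  clear h
  rcases hb with ⟨hb, hb2⟩ | hb <;> rcases hb' with ⟨hb', hb2'⟩ | hb' <;> grind (splits := 30)

theorem pos_lead {n : ℕ} {v : ℤ → ℤ} (h : v ∈ PosRoots n) :
    ∃ m : ℤ, 0 < v m ∧ 0 < m ∧ ∀ t, m < t → v t = 0 := by
  rcases h with ⟨i, j, h1, h2, h3, rfl | rfl⟩ | ⟨i, h1, h2, rfl⟩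
  · refine ⟨j, ?_, by omega, fun t ht => ?_⟩ <;> simp only [eVec, Pi.sub_apply] <;>
      split_ifs <;> omega
  · refine ⟨j, ?_, by omega, fun t ht => ?_⟩ <;> simp only [eVec, Pi.add_apply] <;>
      split_ifs <;> omega
  · refine ⟨i, ?_, by omega, fun t ht => ?_⟩ <;> simp only [eVec] <;>
      split_ifs <;> omega

theorem pos_not_neg {n : ℕ} {v : ℤ → ℤ} (h : v ∈ PosRoots n) (h' : -v ∈ PosRoots n) : False := by
  obtain ⟨m, h1, h2, h3⟩ := pos_lead h
  obtain ⟨m', h1', h2', h3'⟩ := pos_lead h'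
  simp only [Pi.neg_apply] at h1' h3'
  rcases lt_trichotomy m m' with hl | rfl | hl
  · have := h3 _ hl; omega
  · omega
  · have := h3' _ hl; omega

theorem actB_eVec (w : Equiv.Perm ℤ) (hw : ∀ i : ℤ, w (-i) = -(w i)) (k k' : ℤ) (h : w k' = k) :
    actB w⁻¹ (eVec k) = eVec k' := by
  funext t
  have h0 : w 0 = 0 := by have := hw 0; simp only [neg_zero] at this; omega
  have e0 : w t = 0 ↔ t = 0 := by rw [← w.injective.eq_iff (a := t), h0]
  have e1 : w t = k ↔ t = k' := by rw [← w.injective.eq_iff (a := t), h]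
  have e2 : w t = -k ↔ t = -k' := by rw [← w.injective.eq_iff (a := t), hw, h]
  simp only [actB, eVec, inv_inv, e0, e1, e2]

theorem actB_add (w : Equiv.Perm ℤ) (u v : ℤ → ℤ) : actB w (u + v) = actB w u + actB w v := rfl

theorem actB_sub (w : Equiv.Perm ℤ) (u v : ℤ → ℤ) : actB w (u - v) = actB w u - actB w v := rfl

theorem mem_diag (d r : ℕ) (p : ℤ × ℤ) : p ∈ Diagram d (Zlam d r) ↔
    1 ≤ p.1 ∧ p.1 ≤ d ∧ p.1 - d ≤ p.2 ∧ p.2 ≤ r + d - p.1 := by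
  simp only [Diagram, Zlam, Set.mem_setOf_eq]
  omega

/-- second index of the label -/
def bIdx (d r : ℕ) (c : ℤ) : ℤ := if c ≤ 0 then -c else if c ≤ r then c + d else -(c - r)

theorem fLabel_eq (d r : ℕ) (p : ℤ × ℤ) :
    fLabel d r p = eVec ((d : ℤ) + 1 - p.1) + eVec (bIdx d r p.2) := by
  simp only [fLabel, bIdx]
  split_ifs
  · rw [eVec_neg', sub_eq_add_neg]
  · rfl
  · rw [eVec_neg', sub_eq_add_neg]

/-- the labeling `f : D(Z(d,r)) → Φ⁺` is injective with image
exactly `Inv(w^{(d,r)})`. -/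
theorem fLabel_injOn_image_eq_invSet (d r : ℕ) (hd : 1 ≤ d)
    (w : Equiv.Perm ℤ) (hw : IsWdr d r w) :
    Set.InjOn (fLabel d r) (Diagram d (Zlam d r)) ∧
      fLabel d r '' Diagram d (Zlam d r) = InvSet (d + r) w := by
  obtain ⟨⟨hodd, -⟩, hw1, hw2⟩ := hw
  have A1 : ∀ j : ℤ, 1 ≤ j → j ≤ d → actB w⁻¹ (eVec j) = -eVec (j + r) := by
    intro j h1 h2
    rw [← eVec_neg']
    apply actB_eVec w hodd
    rw [hodd, hw2 _ (by omega) (by omega)]; omega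
  have A2 : ∀ j : ℤ, (d : ℤ) < j → j ≤ d + r → actB w⁻¹ (eVec j) = eVec (j - d) := by
    intro j h1 h2
    apply actB_eVec w hodd
    rw [hw1 _ (by omega) (by omega)]; omega
  constructor
  · intro p hp q hq h
    rw [mem_diag] at hp hq
    rw [fLabel_eq, fLabel_eq] at h
    obtain ⟨h1, h2⟩ := eVec_inj_aux d _ _ _ _ (by omega) (by omega) (by omega) (by omega)
      (by unfold bIdx; split_ifs <;> omega) (by unfold bIdx; split_ifs <;> omega) h
    apply Prod.ext
    · omega
    · unfold bIdx at h2
      split_ifs at h2 <;> omega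
  · apply Set.Subset.antisymm
    · rintro _ ⟨⟨i, c⟩, hp, rfl⟩
      rw [mem_diag] at hp
      simp only at hp
      obtain ⟨a, rfl⟩ : ∃ a : ℤ, i = d + 1 - a := ⟨d + 1 - i, by ring⟩
      have ea : (d : ℤ) + 1 - (d + 1 - a) = a := by ring
      simp only [fLabel, ea]
      split_ifs with h1 h2
      · rcases eq_or_lt_of_le h1 with rfl | h1
        · rw [eVec_zero', sub_zero]
          refine ⟨Or.inr ⟨a, by omega, by push_cast; omega, rfl⟩, ?_⟩
          rw [A1 a (by omega) (by omega), neg_neg]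
          exact Or.inr ⟨a + r, by omega, by push_cast; omega, rfl⟩
        · obtain ⟨b, rfl⟩ : ∃ b : ℤ, c = -b := ⟨-c, by ring⟩
          rw [eVec_neg', sub_neg_eq_add]
          refine ⟨Or.inl ⟨b, a, by omega, by omega, by push_cast; omega, Or.inr rfl⟩, ?_⟩
          rw [actB_add, A1 a (by omega) (by omega), A1 b (by omega) (by omega)]
          exact Or.inl ⟨b + r, a + r, by omega, by omega, by push_cast; omega, Or.inr (by abel)⟩
      · refine ⟨Or.inl ⟨a, c + d, by omega, by omega, by push_cast; omega, Or.inr (by abel)⟩, ?_⟩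
        rw [actB_add, A1 a (by omega) (by omega), A2 (c + d) (by omega) (by omega),
          add_sub_cancel_right]
        exact Or.inl ⟨c, a + r, by omega, by omega, by push_cast; omega, Or.inl (by abel)⟩
      · refine ⟨Or.inl ⟨c - r, a, by omega, by omega, by push_cast; omega, Or.inl rfl⟩, ?_⟩
        rw [actB_sub, A1 a (by omega) (by omega), A1 (c - r) (by omega) (by omega)]
        exact Or.inl ⟨c - r + r, a + r, by omega, by omega, by push_cast; omega, Or.inl (by abel)⟩
    · rintro α ⟨hα, hn⟩
      rcases hα with ⟨i, j, h1, h2, h3, rfl | rfl⟩ | ⟨i, h1, h2, rfl⟩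
      · push_cast at h3
        by_cases hj : j ≤ d
        · refine ⟨(d + 1 - j, i + r), ?_, ?_⟩
          · rw [mem_diag]; simp only; omega
          · rw [fLabel_eq, bIdx, if_neg (by simp only; omega), if_neg (by simp only; omega),
              eVec_neg', ← sub_eq_add_neg]
            congr 2 <;> simp only <;> ring
        · exfalso
          refine pos_not_neg ?_ hn
          rw [actB_sub, A2 j (by omega) (by omega)]
          by_cases hi : i ≤ d
          · rw [A1 i h1 hi]
            exact Or.inl ⟨j - d, i + r, by omega, by omega, by push_cast; omega, Or.inr (by abel)⟩
          · rw [A2 i (by omega) (by omega)]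
            exact Or.inl ⟨i - d, j - d, by omega, by omega, by push_cast; omega, Or.inl rfl⟩
      · push_cast at h3
        by_cases hj : j ≤ d
        · refine ⟨(d + 1 - j, -i), ?_, ?_⟩
          · rw [mem_diag]; simp only; omega
          · rw [fLabel_eq, bIdx, if_pos (by simp only; omega)]
            congr 2 <;> simp only <;> ring
        · by_cases hi : i ≤ d
          · refine ⟨(d + 1 - i, j - d), ?_, ?_⟩
            · rw [mem_diag]; simp only; omega
            · rw [fLabel_eq, bIdx, if_neg (by simp only; omega), if_pos (by simp only; omega),
                add_comm]
              congr 2 <;> simp only <;> ring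
          · exfalso
            refine pos_not_neg ?_ hn
            rw [actB_add, A2 j (by omega) (by omega), A2 i (by omega) (by omega)]
            exact Or.inl ⟨i - d, j - d, by omega, by omega, by push_cast; omega, Or.inr rfl⟩
      · push_cast at h2
        by_cases hi : i ≤ d
        · refine ⟨(d + 1 - i, 0), ?_, ?_⟩
          · rw [mem_diag]; simp only; omega
          · rw [fLabel_eq, bIdx, if_pos (by simp only; omega)]
            simp only [neg_zero, eVec_zero', add_zero]
            congr 1; ring
        · exfalso
          refine pos_not_neg ?_ hn
          rw [A2 i (by omega) (by omega)]
          exact Or.inr ⟨i - d, by omega, by push_cast; omega, rfl⟩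

end BST
end

section
/- Let λ be a strict partition with d parts, let B ∈ BS(λ) be a balanced shifted tableau of shape λ, and let j ≥ 0 be an integer such that columns j and j+1 of D(λ) contain the same number of boxes. Then B(i,j) < B(i,j+1) for every i such that (i,j) ∈ D(λ) (equivalently (i,j+1) ∈ D(λ)). -/
open scoped BigOperators

namespace BST

theorem aux_hook (d : ℕ) (lam : ℕ → ℕ) (B : ℤ × ℤ → ℕ) (hB : IsBalanced d lam B)
    (i c : ℤ) (hc : 0 ≤ c) (hp : (i, c) ∈ Diagram d lam) :
    ((Finset.Ioc c ((lam i.toNat : ℤ) + i - d - 1)).filter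
      (fun c' => B (i, c') ≤ B (i, c))).card =
    ((Finset.Ioc i (d : ℤ)).filter (fun k => B (i, c) < B (k, c))).card := by
  have hbal := hB.2 (i, c) hp
  have hoff := hB.1.2
  have hmem : ∀ q : ℤ × ℤ, B (i, c) < B q → q ∈ Diagram d lam := by
    intro q hq
    by_contra h
    rw [hoff q h] at hq
    omega
  set a : ℤ := (lam i.toNat : ℤ) + i - d - 1 with ha
  have hp' := hp
  simp only [Diagram, Set.mem_setOf_eq] at hp'
  have hS : {q ∈ ExtHook d lam i c | B (i, c) < ExtFilling d B q} =
      (((((Finset.Ioc c a).filter (fun c' => B (i, c) < B (i, c'))).image (fun c' => (i, c'))) ∪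
      (((Finset.Ioc i (d : ℤ)).filter (fun k => B (i, c) < B (k, c))).image (fun k => (k, c))) :
        Finset (ℤ × ℤ)) : Set (ℤ × ℤ)) := by
    ext ⟨x, y⟩
    simp only [ExtHook, Hook, ExtFilling, Set.mem_setOf_eq, Set.mem_union, Set.mem_singleton_iff,
      Finset.coe_union, Finset.coe_image, Finset.coe_filter, Set.mem_image, Finset.mem_Ioc,
      Prod.mk.injEq]
    constructor
    · rintro ⟨h, hlt⟩
      have hc0 : ¬ c < 0 := by omega
      simp only [hc0, false_and, and_false, or_false] at h
      rcases h with ⟨rfl, rfl⟩ | ⟨hD, h⟩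
      · rw [if_neg (by omega)] at hlt
        omega
      · have hD' := hD
        simp only [Diagram, Set.mem_setOf_eq] at hD'
        rcases h with ⟨rfl, hcy⟩ | ⟨rfl, hix⟩
        · rw [if_neg (by omega)] at hlt
          exact Or.inl ⟨y, ⟨⟨hcy, by omega⟩, hlt⟩, rfl, rfl⟩
        · rw [if_neg (by omega)] at hlt
          exact Or.inr ⟨x, ⟨⟨hix, by omega⟩, hlt⟩, rfl, rfl⟩
    · rintro (⟨c', ⟨⟨h1, h2⟩, h3⟩, rfl, rfl⟩ | ⟨k, ⟨⟨h1, h2⟩, h3⟩, rfl, rfl⟩)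
      · rw [if_neg (by omega)]
        exact ⟨Or.inl (Or.inl (Or.inr ⟨hmem _ h3, Or.inl ⟨rfl, h1⟩⟩)), h3⟩
      · rw [if_neg (by omega)]
        exact ⟨Or.inl (Or.inl (Or.inr ⟨hmem _ h3, Or.inr ⟨rfl, h1⟩⟩)), h3⟩
  simp only at hbal
  rw [hS, Set.ncard_coe_finset, Finset.card_union_of_disjoint, Finset.card_image_of_injective,
    Finset.card_image_of_injective, rk, if_pos hc] at hbal
  · have h1 := Finset.card_filter_add_card_filter_not (s := Finset.Ioc c a)
      (fun c' => B (i, c) < B (i, c'))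
    simp only [not_lt, Int.card_Ioc] at h1
    have h2 : c ≤ a := by omega
    push_cast at hbal
    omega
  · intro x y h
    simpa using h
  · intro x y h
    simpa using h
  · rw [Finset.disjoint_left]
    rintro ⟨x, y⟩ h1 h2
    simp only [Finset.mem_image, Finset.mem_filter, Finset.mem_Ioc, Prod.mk.injEq] at h1 h2
    obtain ⟨c', h1, h3, h4⟩ := h1
    obtain ⟨k, h2, h5, h6⟩ := h2
    omega

theorem aux_col (d : ℕ) (lam : ℕ → ℕ) (j : ℤ) (hj : 0 ≤ j)
    (hcol : {p ∈ Diagram d lam | p.2 = j}.ncard = {p ∈ Diagram d lam | p.2 = j + 1}.ncard)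
    (i : ℤ) (hi : (i, j) ∈ Diagram d lam) : (i, j + 1) ∈ Diagram d lam := by
  have hfin : {p ∈ Diagram d lam | p.2 = j}.Finite := by
    apply ((Set.finite_Icc (1 : ℤ) d).image (fun k => (k, j))).subset
    rintro ⟨x, y⟩ ⟨h, rfl⟩
    simp only [Diagram, Set.mem_setOf_eq] at h
    exact ⟨x, ⟨h.1, h.2.1⟩, rfl⟩
  have hinj : Function.Injective (fun p : ℤ × ℤ => (p.1, p.2 - 1)) := by
    rintro ⟨x, y⟩ ⟨z, w⟩ h
    simpa using h
  have hsub : (fun p : ℤ × ℤ => (p.1, p.2 - 1)) '' {p ∈ Diagram d lam | p.2 = j + 1} ⊆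
      {p ∈ Diagram d lam | p.2 = j} := by
    rintro _ ⟨⟨x, y⟩, ⟨h, hy⟩, rfl⟩
    simp only [Diagram, Set.mem_setOf_eq] at h hy ⊢
    omega
  have heq := Set.eq_of_subset_of_ncard_le hsub
    (by rw [Set.ncard_image_of_injective _ hinj, hcol]) hfin
  have hm : (i, j) ∈ {p ∈ Diagram d lam | p.2 = j} := ⟨hi, rfl⟩
  rw [← heq] at hm
  obtain ⟨⟨x, y⟩, ⟨h, hy⟩, he⟩ := hm
  simp only [Prod.mk.injEq] at he hy
  obtain ⟨rfl, -⟩ := he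
  rwa [← hy]

/-- if columns `j` and `j+1` (with `j ≥ 0`) of a balanced shifted tableau
have the same number of boxes, then `B(i,j) < B(i,j+1)` whenever `(i,j) ∈ D(λ)`. -/
theorem balanced_same_col_lt (d : ℕ) (hd : 1 ≤ d) (lam : ℕ → ℕ)
    (hlam : IsStrictPartition d lam) (B : ℤ × ℤ → ℕ) (hB : IsBalanced d lam B)
    (j : ℤ) (hj : 0 ≤ j)
    (hcol : {p ∈ Diagram d lam | p.2 = j}.ncard = {p ∈ Diagram d lam | p.2 = j + 1}.ncard) :
    ∀ i : ℤ, ((i, j) ∈ Diagram d lam) → B (i, j) < B (i, j + 1) := by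
  have hoff := hB.1.2
  have key : ∀ n : ℕ, ∀ i : ℤ, ((d : ℤ) - i).toNat ≤ n → (i, j) ∈ Diagram d lam →
      B (i, j) < B (i, j + 1) := by
    intro n
    induction n with
    | zero =>
      intro i hn hi
      by_contra hle
      push Not at hle
      have hi1 := aux_col d lam j hj hcol i hi
      have h1 := aux_hook d lam B hB i j hj hi
      have hD := hi1
      simp only [Diagram, Set.mem_setOf_eq] at hD
      rw [Finset.Ioc_eq_empty (a := i) (b := (d : ℤ)) (by omega), Finset.filter_empty,
        Finset.card_empty, Finset.card_eq_zero] at h1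
      have : j + 1 ∈ (∅ : Finset ℤ) := by
        rw [← h1, Finset.mem_filter, Finset.mem_Ioc]
        exact ⟨⟨by omega, by omega⟩, hle⟩
      simp at this
    | succ n ih =>
      intro i hn hi
      by_contra hle
      push Not at hle
      have hi1 := aux_col d lam j hj hcol i hi
      have h1 := aux_hook d lam B hB i j hj hi
      have h2 := aux_hook d lam B hB i (j + 1) (by omega) hi1
      have hD := hi1
      simp only [Diagram, Set.mem_setOf_eq] at hD
      have h3 : ((Finset.Ioc i (d : ℤ)).filter (fun k => B (i, j) < B (k, j))).card ≤
          ((Finset.Ioc i (d : ℤ)).filter (fun k => B (i, j + 1) < B (k, j + 1))).card := by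
        apply Finset.card_le_card
        intro k hk
        rw [Finset.mem_filter, Finset.mem_Ioc] at hk ⊢
        refine ⟨hk.1, ?_⟩
        have hkD : (k, j) ∈ Diagram d lam := by
          by_contra h
          have := hoff _ h
          omega
        have := ih k (by omega) hkD
        omega
      have h4 : ((Finset.Ioc (j + 1) ((lam i.toNat : ℤ) + i - d - 1)).filter
            (fun c' => B (i, c') ≤ B (i, j + 1))).card <
          ((Finset.Ioc j ((lam i.toNat : ℤ) + i - d - 1)).filter
            (fun c' => B (i, c') ≤ B (i, j))).card := by
        apply Finset.card_lt_card
        rw [Finset.ssubset_iff_of_subset]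
        · refine ⟨j + 1, ?_, ?_⟩
          · rw [Finset.mem_filter, Finset.mem_Ioc]
            exact ⟨⟨by omega, by omega⟩, hle⟩
          · simp
        · intro c hc
          rw [Finset.mem_filter, Finset.mem_Ioc] at hc ⊢
          exact ⟨⟨by omega, hc.1.2⟩, hc.2.trans hle⟩
      omega
  intro i hi
  exact key _ i le_rfl hi

end BST
end

section
/- For all integers d ≥ 1 and r ≥ 0, every balanced shifted tableau B ∈ BS(Z(d,r)) and every 1 ≤ i ≤ d, one has B(i,0) < B(i,1) < B(i,2) < ⋯ < B(i,r). -/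
open scoped BigOperators

namespace BST

theorem core_step (n r t : ℕ) (L : ℕ → ℕ → ℕ)
    (h0 : ∀ y x, 0 < L y x → r < y ∧ y ≤ n ∧ x < y)
    (hpos : ∀ y x, r < y → y ≤ n → x < y → 0 < L y x)
    (hinj : ∀ y x y' x', 0 < L y x → L y x = L y' x' → y = y' ∧ x = x')
    (hbal : ∀ y x, 0 < L y x → ∑ z ∈ Finset.Ioo x y,
      ((if L y x < L y z then 1 else 0) + (if L y x < L z x then 1 else 0))
        = (Finset.Ioo x y).card)
    (hc : ∀ x z y, t + 1 < L y z → t + 1 < L z x → t + 1 < L y x)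
    (hk : ∀ x z y, x < z → z < y → t + 1 < L y x → t + 1 < L y z ∨ t + 1 < L z x) :
    (∀ x z y, t < L y z → t < L z x → t < L y x) ∧
    (∀ x z y, x < z → z < y → t < L y x → t < L y z ∨ t < L z x) := by
  by_cases hex : ∃ y x, L y x = t + 1
  swap
  · push Not at hex
    have e : ∀ y x, t < L y x ↔ t + 1 < L y x := by
      intro y x
      have := hex y x
      omega
    simp only [e]
    exact ⟨hc, hk⟩
  obtain ⟨y, x, hyx⟩ := hex
  have hyx0 : 0 < L y x := by omega
  obtain ⟨hry, hyn, hxy⟩ := h0 y x hyx0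
  have e : ∀ a b, t < L a b → t + 1 < L a b ∨ (a = y ∧ b = x) := by
    intro a b h
    by_cases h' : t + 1 < L a b
    · exact Or.inl h'
    · right
      have := hinj y x a b hyx0 (by omega)
      exact ⟨this.1.symm, this.2.symm⟩
  -- exactly one
  have hone : ∀ z, x < z → z < y → t + 1 < L y z ∨ t + 1 < L z x := by
    have hb := hbal y x hyx0
    rw [Finset.card_eq_sum_ones] at hb
    have hle : ∀ z ∈ Finset.Ioo x y,
      ((if L y x < L y z then 1 else 0) + (if L y x < L z x then 1 else 0)) ≤ 1 := by
      intro z _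
      have := hc x z y
      rw [hyx] at this ⊢
      split_ifs <;> first | omega | (exfalso; have := this ‹_› ‹_›; omega)
    have heq := (Finset.sum_eq_sum_iff_of_le hle).1 hb
    intro z h1 h2
    have := heq z (Finset.mem_Ioo.2 ⟨h1, h2⟩)
    rw [hyx] at this
    by_contra hcon
    push Not at hcon
    rw [if_neg (by omega), if_neg (by omega)] at this
    omega
  -- overcount contradiction
  have hover : ∀ b a m, r < b → b ≤ n → a < b → L b a ≤ t → a < m → m < b →
      t < L b m → t < L m a →
      (∀ z, a < z → z < b → t < L b z ∨ t < L z a) → False := by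
    intro b a m h1 h2 h3 h4 h5 h6 h7 h8 h9
    have hb := hbal b a (hpos b a h1 h2 h3)
    rw [Finset.card_eq_sum_ones] at hb
    have : ∑ z ∈ Finset.Ioo a b, 1 < ∑ z ∈ Finset.Ioo a b,
      ((if L b a < L b z then 1 else 0) + (if L b a < L z a then 1 else 0)) := by
      apply Finset.sum_lt_sum
      · intro z hz
        rw [Finset.mem_Ioo] at hz
        rcases h9 z hz.1 hz.2 with h | h
        · rw [if_pos (show L b a < L b z by omega)]; omega
        · rw [if_pos (show L b a < L z a by omega)]; omega
      · refine ⟨m, Finset.mem_Ioo.2 ⟨h5, h6⟩, ?_⟩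
        rw [if_pos (by omega), if_pos (by omega)]; omega
    omega
  have hup : ∀ w, t + 1 < L w y → t < L w x := by
    intro w
    induction w using Nat.strong_induction_on with
    | _ w ih =>
      intro hw
      by_contra hcon
      obtain ⟨g1, g2, g3⟩ := h0 w y (by omega)
      refine hover w x y g1 g2 (by omega) (by omega) hxy g3 (by omega) (by omega) ?_
      intro z hz1 hz2
      rcases lt_trichotomy z y with h | h | h
      · rcases hone z hz1 h with h' | h'
        · have := hc z y w hw h'
          left; omega
        · right; omega
      · subst h; right; omega
      · rcases hk y z w h hz2 hw with h' | h'
        · left; omega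
        · right; exact ih z hz2 h'
  have hdown : ∀ s v, v + s = x → t + 1 < L x v → t < L y v := by
    intro s
    induction s using Nat.strong_induction_on with
    | _ s ih =>
      intro v hs hv
      by_contra hcon
      obtain ⟨g1, g2, g3⟩ := h0 x v (by omega)
      refine hover y v x hry hyn (by omega) (by omega) g3 hxy (by omega) (by omega) ?_
      intro z hz1 hz2
      rcases lt_trichotomy z x with h | h | h
      · rcases hk v z x hz1 h hv with h' | h'
        · left; exact ih (x - z) (by omega) z (by omega) h'
        · right; omega
      · subst h; right; omega
      · rcases hone z h hz2 with h' | h'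
        · left; omega
        · have := hc v x z h' hv
          right; omega
  constructor
  · intro a m b hbm hma
    rcases e _ _ hbm with h | ⟨h, h'⟩
    · rcases e _ _ hma with g | ⟨g, g'⟩
      · have := hc a m b h g
        omega
      · subst g g'; exact hup b h
    · rcases e _ _ hma with g | ⟨g, g'⟩
      · subst h h'
        have := (h0 m a (by omega)).2.2
        exact hdown (m - a) a (by omega) g
      · omega
  · intro a m b ham hmb h
    rcases e _ _ h with h | ⟨h, h'⟩
    · rcases hk a m b ham hmb h with g | g
      · left; omega
      · right; omega
    · subst h h'
      rcases hone m ham hmb with g | g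
      · left; omega
      · right; omega

theorem core (n r N : ℕ) (L : ℕ → ℕ → ℕ)
    (hN : ∀ y x, L y x ≤ N)
    (h0 : ∀ y x, 0 < L y x → r < y ∧ y ≤ n ∧ x < y)
    (hpos : ∀ y x, r < y → y ≤ n → x < y → 0 < L y x)
    (hinj : ∀ y x y' x', 0 < L y x → L y x = L y' x' → y = y' ∧ x = x')
    (hbal : ∀ y x, 0 < L y x → ∑ z ∈ Finset.Ioo x y,
      ((if L y x < L y z then 1 else 0) + (if L y x < L z x then 1 else 0))
        = (Finset.Ioo x y).card) (s : ℕ) :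
    ∀ t, N ≤ t + s → (∀ x z y, t < L y z → t < L z x → t < L y x) ∧
    (∀ x z y, x < z → z < y → t < L y x → t < L y z ∨ t < L z x) := by
  induction s with
  | zero =>
    intro t ht
    constructor
    · intro x z y h
      have := hN y z
      omega
    · intro x z y _ _ h
      have := hN y x
      omega
  | succ s ih =>
    intro t ht
    obtain ⟨h1, h2⟩ := ih (t + 1) (by omega)
    exact core_step n r t L h0 hpos hinj hbal h1 h2

theorem balanced_trapezoid_row_increasing (d r : ℕ) (hd : 1 ≤ d)
    (B : ℤ × ℤ → ℕ) (hB : IsBalanced d (Zlam d r) B)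
    (i : ℤ) (hi1 : 1 ≤ i) (hid : i ≤ (d : ℤ)) :
    ∀ c : ℤ, 0 ≤ c → c < (r : ℤ) → B (i, c) < B (i, c + 1) := by
  intro c hc0 hcr
  obtain ⟨⟨hbij, -⟩, hbal⟩ := hB
  set F : ℕ → ℕ → ℤ × ℤ := fun y x => ((d : ℤ) + 1 + r - y, (x : ℤ)) with hF
  have memD : ∀ p : ℤ × ℤ, p ∈ Diagram d (Zlam d r) ↔
      1 ≤ p.1 ∧ p.1 ≤ (d : ℤ) ∧ p.1 - (d : ℤ) ≤ p.2 ∧ p.2 ≤ r + d - p.1 := by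
    intro p
    simp only [Diagram, Zlam, Set.mem_setOf_eq]
    omega
  have memF : ∀ y x : ℕ, r < y → y ≤ r + d → x < y → F y x ∈ Diagram d (Zlam d r) := by
    intro y x h1 h2 h3
    rw [memD]
    simp only [hF]
    omega
  set L : ℕ → ℕ → ℕ := fun y x => if r < y ∧ y ≤ r + d ∧ x < y then B (F y x) else 0 with hL
  have Lpos : ∀ y x : ℕ, r < y → y ≤ r + d → x < y → L y x = B (F y x) := by
    intro y x h1 h2 h3
    exact if_pos ⟨h1, h2, h3⟩
  have h0 : ∀ y x, 0 < L y x → r < y ∧ y ≤ r + d ∧ x < y := by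
    intro y x h
    by_contra hcon
    simp only [hL] at h
    rw [if_neg hcon] at h
    omega
  have hpos : ∀ y x, r < y → y ≤ r + d → x < y → 0 < L y x := by
    intro y x h1 h2 h3
    rw [Lpos y x h1 h2 h3]
    exact (hbij.mapsTo (memF y x h1 h2 h3)).1
  have hN : ∀ y x, L y x ≤ sizeP d (Zlam d r) := by
    intro y x
    by_cases h : 0 < L y x
    · obtain ⟨h1, h2, h3⟩ := h0 y x h
      rw [Lpos y x h1 h2 h3]
      exact (hbij.mapsTo (memF y x h1 h2 h3)).2
    · omega
  have hinj : ∀ y x y' x', 0 < L y x → L y x = L y' x' → y = y' ∧ x = x' := by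
    intro y x y' x' h he
    obtain ⟨h1, h2, h3⟩ := h0 y x h
    obtain ⟨g1, g2, g3⟩ := h0 y' x' (he ▸ h)
    rw [Lpos y x h1 h2 h3, Lpos y' x' g1 g2 g3] at he
    have := hbij.injOn (memF y x h1 h2 h3) (memF y' x' g1 g2 g3) he
    simp only [hF, Prod.mk.injEq] at this
    omega
  have hbal' : ∀ y x, 0 < L y x → ∑ z ∈ Finset.Ioo x y,
      ((if L y x < L y z then 1 else 0) + (if L y x < L z x then 1 else 0))
        = (Finset.Ioo x y).card := by
    intro y x h
    obtain ⟨h1, h2, h3⟩ := h0 y x h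
    have hb := hbal _ (memF y x h1 h2 h3)
    rw [Finset.sum_add_distrib, ← Finset.card_filter, ← Finset.card_filter]
    have hrk : rk d (Zlam d r) (F y x).1 (F y x).2 - 1 = ((Finset.Ioo x y).card : ℤ) := by
      simp only [rk, Zlam, hF, Nat.card_Ioo]
      rw [if_pos (by omega)]
      omega
    rw [hrk] at hb
    have hb2 := Int.ofNat.inj hb
    rw [← hb2]
    have hset : {q ∈ ExtHook d (Zlam d r) (F y x).1 (F y x).2 |
        B (F y x) < ExtFilling d B q} =
        (((Finset.Ioo x y).filter (fun z => L y x < L y z)).image (fun z => F y z) ∪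
        ((Finset.Ioo x y).filter (fun z => L y x < L z x)).image (fun z => F z x) :
          Finset (ℤ × ℤ)) := by
      ext ⟨a, b⟩
      simp only [Finset.coe_union, Finset.coe_image, Set.mem_union, Set.mem_image,
        Finset.mem_coe, Finset.mem_filter, Finset.mem_Ioo, ExtHook, Hook, Set.mem_setOf_eq,
        Set.mem_singleton_iff, memD]
      have hext : 1 ≤ a → a ≤ d → 0 ≤ b → ExtFilling d B (a, b) = B (a, b) := by
        intro _ _ _
        simp only [ExtFilling]
        rw [if_neg (by omega)]
      rw [Lpos y x h1 h2 h3]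
      have hFm := (memD _).1 (memF y x h1 h2 h3)
      have hx0 : 0 ≤ (F y x).2 := by simp only [hF]; omega
      constructor
      · rintro ⟨hh, hlt⟩
        rcases hh with ((hh | ⟨hD, hh⟩) | ⟨-, hh, -⟩) | ⟨hh, -⟩
        · have hh' : (a, b) = F y x := hh
          have e1 : a = (F y x).1 := by rw [← hh']
          have e2 : b = (F y x).2 := by rw [← hh']
          rw [hext (by omega) (by omega) (by omega), hh'] at hlt
          omega
        · rcases hh with ⟨e1, e2⟩ | ⟨e1, e2⟩
          · left
            simp only [hF] at e1 e2 hD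
            rw [hext (by omega) (by omega) (by omega)] at hlt
            have hq : F y b.toNat = (a, b) := by
              simp only [hF, Prod.mk.injEq]; omega
            refine ⟨b.toNat, ⟨⟨by omega, by omega⟩, ?_⟩, hq⟩
            rw [Lpos y b.toNat h1 h2 (by omega), hq]
            exact hlt
          · right
            simp only [hF] at e1 e2 hD
            rw [hext (by omega) (by omega) (by omega)] at hlt
            have hq : F (d + 1 + r - a : ℤ).toNat x = (a, b) := by
              simp only [hF, Prod.mk.injEq]; omega
            refine ⟨(d + 1 + r - a : ℤ).toNat, ⟨⟨by omega, by omega⟩, ?_⟩, hq⟩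
            rw [Lpos _ x (by omega) (by omega) (by omega), hq]
            exact hlt
        · omega
        · omega
      · rintro (⟨z, ⟨⟨hz1, hz2⟩, hlt⟩, hq⟩ | ⟨z, ⟨⟨hz1, hz2⟩, hlt⟩, hq⟩)
        · rw [Lpos y z h1 h2 hz2, hq] at hlt
          simp only [hF, Prod.mk.injEq] at hq
          obtain ⟨q1, q2⟩ := hq
          rw [hext (by omega) (by omega) (by omega)]
          refine ⟨Or.inl (Or.inl (Or.inr ⟨by omega, Or.inl ?_⟩)), hlt⟩
          simp only [hF]
          omega
        · obtain ⟨g1, g2, g3⟩ := h0 z x (by omega)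
          rw [Lpos z x g1 g2 g3, hq] at hlt
          simp only [hF, Prod.mk.injEq] at hq
          obtain ⟨q1, q2⟩ := hq
          rw [hext (by omega) (by omega) (by omega)]
          refine ⟨Or.inl (Or.inl (Or.inr ⟨by omega, Or.inr ?_⟩)), hlt⟩
          simp only [hF]
          omega
    rw [hset, Set.ncard_coe_finset, Finset.card_union_of_disjoint, Finset.card_image_of_injective,
      Finset.card_image_of_injective]
    · intro u v huv
      simp only [hF, Prod.mk.injEq] at huv
      omega
    · intro u v huv
      simp only [hF, Prod.mk.injEq] at huv
      omega
    · rw [Finset.disjoint_left]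
      intro q hq1 hq2
      simp only [Finset.mem_image, Finset.mem_filter, Finset.mem_Ioo] at hq1 hq2
      obtain ⟨u, ⟨hu, -⟩, rfl⟩ := hq1
      obtain ⟨v, ⟨hv, -⟩, hq⟩ := hq2
      simp only [hF, Prod.mk.injEq] at hq
      omega
  have hy : F (d + 1 + r - i : ℤ).toNat c.toNat = (i, c) := by
    simp only [hF, Prod.mk.injEq]; omega
  have hy' : F (d + 1 + r - i : ℤ).toNat (c.toNat + 1) = (i, c + 1) := by
    simp only [hF, Prod.mk.injEq]; omega
  generalize hyd : (d + 1 + r - i : ℤ).toNat = y at hy hy'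
  have e1 := Lpos y c.toNat (by omega) (by omega) (by omega)
  have e2 := Lpos y (c.toNat + 1) (by omega) (by omega) (by omega)
  rw [hy] at e1
  rw [hy'] at e2
  have hp := hpos y c.toNat (by omega) (by omega) (by omega)
  have key := (core (r + d) r _ L hN h0 hpos hinj hbal' (sizeP d (Zlam d r)) (L y c.toNat - 1)
    (by omega)).2 c.toNat (c.toNat + 1) y (by omega) (by omega) (by omega)
  rcases key with h | h
  · have hne : L y c.toNat ≠ L y (c.toNat + 1) := by
      intro he
      have := (hinj _ _ _ _ hp he).2
      omega
    omega
  · have := (h0 _ _ (by omega : 0 < L (c.toNat + 1) c.toNat)).1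
    omega

end BST
end
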